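/- arXiv:1811.08405 — 2 statements merged into one kernel-verified Lean document; each statement's English description precedes it below -/
import Mathlib

section
/- Sum rule for the transfer matrix (diagonal twist): assume in addition that ξ₁², …, ξ_N² are pairwise distinct and K = diag(α, β, γ). Then the operator identity (1/2)[α(D₁ − D₁⁻¹) + β(D₂ − D₂⁻¹) + γ(D₃ − D₃⁻¹)] = Σ_{n=1}^{N} T₁(ζ_n) / (2 ∏_{b=1, b≠n}^{N} (ξ_n/ξ_b − ξ_b/ξ_n)) holds in End(H). -/
open Matrix Kronecker BigOperators

/-- Elementary 3×3 matrices `E i j`. -/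
noncomputable def Eb (i j : Fin 3) : Matrix (Fin 3) (Fin 3) ℂ :=
  Matrix.single i j 1

/-- Principal gradation trigonometric R-matrix of `U_q(gl₃^)`, with spectral
parameter `λ = u³` parametrized by the cube root `u`. -/
noncomputable def RpM (q u : ℂ) : Matrix (Fin 3 × Fin 3) (Fin 3 × Fin 3) ℂ :=
  (∑ k : Fin 3, ∑ p : Fin 3,
    if k = p then (u ^ 3 * q - (u ^ 3 * q)⁻¹) • (Eb k k ⊗ₖ Eb k k)
    else (u ^ 3 - (u ^ 3)⁻¹) • (Eb k k ⊗ₖ Eb p p))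
  + (q - q⁻¹) • ∑ k : Fin 3, ∑ p : Fin 3,
      (if k < p then
        u ^ ((3 : ℤ) - 2 * (((p : ℕ) : ℤ) - ((k : ℕ) : ℤ))) • (Eb k p ⊗ₖ Eb p k)
        + u ^ (2 * (((p : ℕ) : ℤ) - ((k : ℕ) : ℤ)) - (3 : ℤ)) • (Eb p k ⊗ₖ Eb k p)
      else 0)

/-- Diagonal twist matrix `K⁽¹⁾ = diag(α, β, γ)`. -/
noncomputable def Ktw1 (α β γ : ℂ) : Matrix (Fin 3) (Fin 3) ℂ :=
  Matrix.diagonal ![α, β, γ]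

/-- Cyclic twist matrix `K⁽²⁾ = αE₁₃ + βE₂₁ + γE₃₂`. -/
noncomputable def Ktw2 (α β γ : ℂ) : Matrix (Fin 3) (Fin 3) ℂ :=
  α • Eb 0 2 + β • Eb 1 0 + γ • Eb 2 1

/-- Cyclic twist matrix `K⁽³⁾ = βE₁₂ + γE₂₃ + αE₃₁`. -/
noncomputable def Ktw3 (α β γ : ℂ) : Matrix (Fin 3) (Fin 3) ℂ :=
  β • Eb 0 1 + γ • Eb 1 2 + α • Eb 2 0

/-- Index type of the quantum space `H = (ℂ³)^{⊗N}`. -/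
abbrev HIdx (N : ℕ) := Fin N → Fin 3

/-- `R_{a,b}(u)`: the R-matrix acting on the auxiliary space and the `b`-th
factor of the quantum space, identity elsewhere. -/
noncomputable def Raux (N : ℕ) (q u : ℂ) (b : Fin N) :
    Matrix (Fin 3 × HIdx N) (Fin 3 × HIdx N) ℂ :=
  Matrix.of fun x y =>
    RpM q u (x.1, x.2 b) (y.1, y.2 b) * (if ∀ c, c ≠ b → x.2 c = y.2 c then 1 else 0)

/-- The twist matrix acting on the auxiliary space, identity on `H`. -/
noncomputable def Kaux (N : ℕ) (K : Matrix (Fin 3) (Fin 3) ℂ) :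
    Matrix (Fin 3 × HIdx N) (Fin 3 × HIdx N) ℂ :=
  Matrix.of fun x y => K x.1 y.1 * (if x.2 = y.2 then 1 else 0)

/-- Monodromy matrix `M(u) = K_a R_{a,N}(u/ζ_N) ⋯ R_{a,1}(u/ζ_1)`. -/
noncomputable def Mon (N : ℕ) (q : ℂ) (ζ : Fin N → ℂ) (K : Matrix (Fin 3) (Fin 3) ℂ)
    (u : ℂ) : Matrix (Fin 3 × HIdx N) (Fin 3 × HIdx N) ℂ :=
  Kaux N K * (((List.finRange N).reverse.map fun b => Raux N q (u / ζ b) b).prod)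

/-- Transfer matrix `T₁(u) = tr_a M(u)`. -/
noncomputable def T1 (N : ℕ) (q : ℂ) (ζ : Fin N → ℂ) (K : Matrix (Fin 3) (Fin 3) ℂ)
    (u : ℂ) : Matrix (HIdx N) (HIdx N) ℂ :=
  Matrix.of fun f g => ∑ i : Fin 3, Mon N q ζ K u (i, f) (i, g)

/-- The q-antisymmetric projector `P⁻ = R_q(p⁻¹)/(2(q⁻¹ − q))`. -/
noncomputable def Pm (q p : ℂ) : Matrix (Fin 3 × Fin 3) (Fin 3 × Fin 3) ℂ :=
  (2 * (q⁻¹ - q))⁻¹ • RpM q p⁻¹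

/-- Embedding of an operator on (auxiliary space a) ⊗ H into
(aux a) ⊗ (aux b) ⊗ H, identity on aux b. -/
noncomputable def embA (N : ℕ) (M : Matrix (Fin 3 × HIdx N) (Fin 3 × HIdx N) ℂ) :
    Matrix (Fin 3 × Fin 3 × HIdx N) (Fin 3 × Fin 3 × HIdx N) ℂ :=
  Matrix.of fun x y => M (x.1, x.2.2) (y.1, y.2.2) * (if x.2.1 = y.2.1 then 1 else 0)

/-- Embedding of an operator on (auxiliary space b) ⊗ H into
(aux a) ⊗ (aux b) ⊗ H, identity on aux a. -/
noncomputable def embB (N : ℕ) (M : Matrix (Fin 3 × HIdx N) (Fin 3 × HIdx N) ℂ) :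
    Matrix (Fin 3 × Fin 3 × HIdx N) (Fin 3 × Fin 3 × HIdx N) ℂ :=
  Matrix.of fun x y => M (x.2.1, x.2.2) (y.2.1, y.2.2) * (if x.1 = y.1 then 1 else 0)

/-- Embedding of an operator on (aux a) ⊗ (aux b) into (aux a) ⊗ (aux b) ⊗ H. -/
noncomputable def embP (N : ℕ) (P : Matrix (Fin 3 × Fin 3) (Fin 3 × Fin 3) ℂ) :
    Matrix (Fin 3 × Fin 3 × HIdx N) (Fin 3 × Fin 3 × HIdx N) ℂ :=
  Matrix.of fun x y => P (x.1, x.2.1) (y.1, y.2.1) * (if x.2.2 = y.2.2 then 1 else 0)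

/-- Fused transfer matrix `T₂(u) = tr_{ab}(P⁻_{ab} M_b(u) M_a(u/p))`. -/
noncomputable def T2 (N : ℕ) (q p : ℂ) (ζ : Fin N → ℂ) (K : Matrix (Fin 3) (Fin 3) ℂ)
    (u : ℂ) : Matrix (HIdx N) (HIdx N) ℂ :=
  Matrix.of fun f g => ∑ ia : Fin 3, ∑ ib : Fin 3,
    (embP N (Pm q p) * embB N (Mon N q ζ K u) * embA N (Mon N q ζ K (u / p)))
      (ia, ib, f) (ia, ib, g)

/-- Number of tensor factors of the basis vector indexed by `f` in state `i`. -/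
noncomputable def cnt (N : ℕ) (f : HIdx N) (i : Fin 3) : ℕ :=
  (Finset.univ.filter fun m => f m = i).card

/-- The diagonal operator `D_i = q^{N_i}` on `H`. -/
noncomputable def Dop (N : ℕ) (q : ℂ) (i : Fin 3) : Matrix (HIdx N) (HIdx N) ℂ :=
  Matrix.diagonal fun f => q ^ cnt N f i

/-- The inverse diagonal operator `D_i⁻¹ = q^{−N_i}` on `H`. -/
noncomputable def DopInv (N : ℕ) (q : ℂ) (i : Fin 3) : Matrix (HIdx N) (HIdx N) ℂ :=
  Matrix.diagonal fun f => (q ^ cnt N f i)⁻¹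

/-!
After a gauge transformation (conjugation by `diag(1, u², u⁴)` on the auxiliary space), each factor
`R_{a,b}(u / ζ_b)` of the monodromy matrix is a Laurent pencil `(ξ / ξ_b) a_b - (ξ_b / ξ) c_b` in
`ξ = u³`, with constant coefficients `a_b` upper and `c_b` lower block triangular over the auxiliary
space. In `ξ²` the product of the pencils is, up to a prefactor, a polynomial of degree `N`, and
Lagrange interpolation at the nodes `ξ_n²` and `0` writes the difference `∏ a_b - ∏ c_b` of its
extreme coefficients as a weighted sum of its values at `ξ = ξ_n`. The gauge transformation does not
change the diagonal blocks over the auxiliary space, and those of a product of triangular matrices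
are the products of the diagonal blocks, so the `i`-th block of `∏ a_b - ∏ c_b` is `D_i - D_i⁻¹`.
-/

section Interpolation

open Polynomial

theorem sum_eval_div_mul_prod_sub {K ι : Type*} [Field K] [Fintype ι] [DecidableEq ι] {x : ι → K}
    (hx : Function.Injective x) (hx0 : ∀ n, x n ≠ 0) {P : K[X]}
    (hP : P.natDegree ≤ Fintype.card ι) :
    ∑ n, P.eval (x n) / (x n * ∏ b ∈ Finset.univ.erase n, (x n - x b)) =
      P.coeff (Fintype.card ι) - P.coeff 0 / ∏ b, -x b := by
  -- Lagrange interpolation at the nodes `x n` and the additional node `0`.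
  have hinj : Function.Injective (fun o : Option ι => o.elim 0 x) := by
    rintro (_ | a) (_ | b) h
    · rfl
    · exact absurd h.symm (hx0 b)
    · exact absurd h (hx0 a)
    · exact congrArg some (hx h)
  have hdeg : P.degree < (Finset.univ : Finset (Option ι)).card := by
    rw [Finset.card_univ, Fintype.card_option]
    exact (degree_le_of_natDegree_le hP).trans_lt (by exact_mod_cast Nat.lt_succ_self _)
  have erase_none : (Finset.univ.erase none : Finset (Option ι)) =
      Finset.univ.map Function.Embedding.some := by ext (_ | _) <;> simp
  have erase_some (n : ι) : (Finset.univ.erase (some n) : Finset (Option ι)) =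
      Finset.insertNone (Finset.univ.erase n) := by ext (_ | _) <;> simp
  have lagrange := Lagrange.coeff_eq_sum hinj.injOn hdeg
  simp only [Fintype.sum_option, erase_none, erase_some, Finset.prod_insertNone, Finset.prod_map,
    Option.elim, sub_zero, zero_sub, Finset.card_univ, Fintype.card_option, Nat.add_sub_cancel,
    Function.Embedding.some_apply] at lagrange
  rw [lagrange, coeff_zero_eq_eval_zero, add_sub_cancel_left]

theorem sum_smul_eval_algebraMap {K A ι : Type*} [Field K] [Ring A] [Algebra K A] [Fintype ι]
    [DecidableEq ι] {x : ι → K} (hx : Function.Injective x) (hx0 : ∀ n, x n ≠ 0) {P : A[X]}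
    (hP : P.natDegree ≤ Fintype.card ι) :
    ∑ n, (x n * ∏ b ∈ Finset.univ.erase n, (x n - x b))⁻¹ • P.eval (algebraMap K A (x n)) =
      P.coeff (Fintype.card ι) - (∏ b, -x b)⁻¹ • P.coeff 0 := by
  have eval_eq (n : ι) : P.eval (algebraMap K A (x n)) =
      ∑ k ∈ Finset.range (Fintype.card ι + 1), x n ^ k • P.coeff k := by
    simp only [eval_eq_sum_range' (Nat.lt_succ_of_le hP), ← map_pow, ← Algebra.commutes,
      Algebra.smul_def]
  have monomial_sum (k : ℕ) (hk : k ∈ Finset.range (Fintype.card ι + 1)) :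
      ∑ n, (x n * ∏ b ∈ Finset.univ.erase n, (x n - x b))⁻¹ * x n ^ k =
        (if k = Fintype.card ι then 1 else 0) - if k = 0 then (∏ b, -x b)⁻¹ else 0 := by
    simpa [div_eq_inv_mul, coeff_X_pow, eq_comm] using sum_eval_div_mul_prod_sub hx hx0
      ((natDegree_X_pow_le k).trans (Finset.mem_range_succ_iff.1 hk))
  simp only [eval_eq, Finset.smul_sum, smul_smul]
  rw [Finset.sum_comm]
  simp only [← Finset.sum_smul]
  rw [Finset.sum_congr rfl fun k hk => by rw [monomial_sum k hk]]
  simp [sub_smul, ite_smul, Finset.sum_sub_distrib]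

theorem list_prod_map_smul {κ K A : Type*} [CommSemiring K] [Semiring A] [Algebra K A] (L : List κ)
    (c : κ → K) (a : κ → A) :
    (L.map fun b => c b • a b).prod = (L.map c).prod • (L.map a).prod := by
  induction L with
  | nil => simp
  | cons b L ih => simp only [List.map_cons, List.prod_cons, ih, smul_mul_smul_comm]

theorem list_prod_map_eq_prod_univ {ι M : Type*} [Fintype ι] [CommMonoid M] {L : List ι}
    (hL : (L : Multiset ι) = Finset.univ.val) (f : ι → M) : (L.map f).prod = ∏ b, f b := by
  rw [Finset.prod, ← hL, Multiset.map_coe, Multiset.prod_coe]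

variable {K A ι : Type*} [Field K] [Ring A] [Algebra K A] [Fintype ι] [DecidableEq ι]

theorem sum_smul_list_prod_sub {x : ι → K} (hx : Function.Injective x) (hx0 : ∀ n, x n ≠ 0)
    {L : List ι} (hL : (L : Multiset ι) = Finset.univ.val) (a b : ι → A) :
    ∑ n, (x n * ∏ m ∈ Finset.univ.erase n, (x n - x m))⁻¹ •
        (L.map fun m => x n • a m - x m • b m).prod =
      (L.map a).prod - (L.map b).prod := by
  let pencil (m : ι) : A[X] := C (a m) * X + C (-x m • b m)
  have pencil_natDegree (m : ι) : (pencil m).natDegree ≤ 1 := natDegree_linear_le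
  have hcard : L.length = Fintype.card ι := congrArg Multiset.card hL
  have natDegree_le : (L.map pencil).prod.natDegree ≤ Fintype.card ι := by
    refine (natDegree_list_prod_le _).trans ?_
    simpa [hcard] using List.sum_le_card_nsmul ((L.map pencil).map natDegree) 1
      (by simpa using fun m _ => pencil_natDegree m)
  have eval_prod (n : ι) : (L.map pencil).prod.eval (algebraMap K A (x n)) =
      (L.map fun m => x n • a m - x m • b m).prod := by
    rw [eval, eval₂_list_prod_noncomm (RingHom.id A) (algebraMap K A (x n)) (L.map pencil)
      fun p _ k => (Algebra.commutes (x n) (p.coeff k)).symm, List.map_map]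
    congr! 3 with m
    simp [pencil, ← Algebra.commutes, Algebra.smul_def, sub_eq_add_neg]
  have coeff_card : (L.map pencil).prod.coeff (Fintype.card ι) = (L.map a).prod := by
    have h := coeff_list_prod_of_natDegree_le (L.map pencil) 1
      (by simpa using fun m _ => pencil_natDegree m)
    simpa [hcard, Function.comp_def, pencil] using h
  have coeff_zero : (L.map pencil).prod.coeff 0 = (∏ m, -x m) • (L.map b).prod := by
    rw [← constantCoeff_apply, map_list_prod, List.map_map, ← list_prod_map_eq_prod_univ hL,
      ← list_prod_map_smul]
    simp [Function.comp_def, pencil]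
  have hprod : ∏ m, -x m ≠ 0 := Finset.prod_ne_zero_iff.2 fun m _ => neg_ne_zero.2 (hx0 m)
  simpa only [eval_prod, coeff_card, coeff_zero, inv_smul_smul₀ hprod] using
    sum_smul_eval_algebraMap hx hx0 natDegree_le

theorem prod_erase_div_sub_div_mul_prod {ξ : ι → K} (hξ : ∀ b, ξ b ≠ 0) (n : ι) :
    (∏ b ∈ Finset.univ.erase n, (ξ n / ξ b - ξ b / ξ n)) * ∏ b, ξ n * ξ b =
      ξ n ^ 2 * ∏ b ∈ Finset.univ.erase n, (ξ n ^ 2 - ξ b ^ 2) := by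
  rw [← Finset.mul_prod_erase _ _ (Finset.mem_univ n), mul_left_comm, ← Finset.prod_mul_distrib,
    ← sq]
  congr! 2 with b
  have := hξ n
  have := hξ b
  field_simp

theorem sum_smul_list_prod_div_sub_div {ξ : ι → K} (hξ : ∀ b, ξ b ≠ 0)
    (hinj : Function.Injective fun b => ξ b ^ 2) {L : List ι}
    (hL : (L : Multiset ι) = Finset.univ.val) (a b : ι → A) :
    ∑ n, (∏ m ∈ Finset.univ.erase n, (ξ n / ξ m - ξ m / ξ n))⁻¹ •
        (L.map fun m => (ξ n / ξ m) • a m - (ξ m / ξ n) • b m).prod =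
      (L.map a).prod - (L.map b).prod := by
  rw [← sum_smul_list_prod_sub hinj (fun n => pow_ne_zero 2 (hξ n)) hL a b]
  refine Finset.sum_congr rfl fun n _ => ?_
  have factor (m : ι) : (ξ n / ξ m) • a m - (ξ m / ξ n) • b m =
      (ξ n * ξ m)⁻¹ • (ξ n ^ 2 • a m - ξ m ^ 2 • b m) := by
    have := hξ n
    have := hξ m
    rw [smul_sub, smul_smul, smul_smul]
    congr! 2 <;> field_simp
  simp only [factor, list_prod_map_smul, list_prod_map_eq_prod_univ hL, smul_smul,
    Finset.prod_inv_distrib, ← mul_inv, prod_erase_div_sub_div_mul_prod hξ]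

end Interpolation

section AuxiliaryBlocks

variable {n ι R : Type*}

/-- The `i`-th diagonal block of an operator on (auxiliary space) ⊗ (quantum space), an operator
on the quantum space. -/
def auxBlock [Semiring R] (i : n) : Matrix (n × ι) (n × ι) R →ₗ[R] Matrix ι ι R where
  toFun M := M.submatrix (Prod.mk i) (Prod.mk i)
  map_add' _ _ := rfl
  map_smul' _ _ := rfl

theorem auxBlock_apply [Semiring R] (i : n) (M : Matrix (n × ι) (n × ι) R) (f g : ι) :
    auxBlock i M f g = M (i, f) (i, g) :=
  rfl

theorem auxBlock_transpose [Semiring R] (i : n) (M : Matrix (n × ι) (n × ι) R) :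
    auxBlock i Mᵀ = (auxBlock i M)ᵀ :=
  rfl

variable [Fintype n] [Fintype ι]

theorem auxBlock_mul [LinearOrder n] [Semiring R] {M M' : Matrix (n × ι) (n × ι) R}
    (hM : M.BlockTriangular Prod.fst) (hM' : M'.BlockTriangular Prod.fst) (i : n) :
    auxBlock i (M * M') = auxBlock i M * auxBlock i M' := by
  ext f g
  simp only [auxBlock_apply, Matrix.mul_apply, Fintype.sum_prod_type]
  refine Fintype.sum_eq_single i fun k hk => Finset.sum_eq_zero fun h _ => ?_
  rcases lt_or_gt_of_ne hk with hki | hik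
  · rw [hM hki, zero_mul]
  · rw [hM' hik, mul_zero]

theorem auxBlock_list_prod [LinearOrder n] [DecidableEq ι] [Semiring R]
    {L : List (Matrix (n × ι) (n × ι) R)} (hL : ∀ M ∈ L, M.BlockTriangular Prod.fst) (i : n) :
    auxBlock i L.prod = (L.map (auxBlock i)).prod := by
  induction L with
  | nil => ext f g; simp [auxBlock_apply, Matrix.one_apply]
  | cons M L ih =>
    rw [List.forall_mem_cons] at hL
    have hprod : L.prod.BlockTriangular Prod.fst :=
      list_prod_mem (S := Matrix.blockTriangularSubsemiring R Prod.fst) hL.2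
    rw [List.prod_cons, auxBlock_mul hL.1 hprod, ih hL.2, List.map_cons, List.prod_cons]

theorem auxBlock_eq_of_semiconjBy_diagonal [DecidableEq n] [DecidableEq ι] [CommSemiring R]
    [IsCancelMulZero R] {d : n → R} {M M' : Matrix (n × ι) (n × ι) R}
    (h : SemiconjBy (Matrix.diagonal fun x : n × ι => d x.1) M M') {i : n} (hd : d i ≠ 0) :
    auxBlock i M' = auxBlock i M := by
  ext f g
  have hentry := congrFun₂ h.eq (i, f) (i, g)
  rw [Matrix.diagonal_mul, Matrix.mul_diagonal, mul_comm] at hentry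
  exact (mul_right_cancel₀ hd hentry).symm

theorem semiconjBy_list_prod_map {κ M : Type*} [Monoid M] {g : M} {a a' : κ → M}
    (h : ∀ b, SemiconjBy g (a b) (a' b)) (L : List κ) :
    SemiconjBy g (L.map a).prod (L.map a').prod := by
  induction L with
  | nil => exact .one_right g
  | cons b L ih => simpa using (h b).mul_right ih

end AuxiliaryBlocks

section SiteOperators

variable {N : ℕ} {n R : Type*} [DecidableEq n]

/-- The operator `A` on `V ⊗ V` acting on the auxiliary space and the `b`-th factor of the quantum
space `V^{⊗N}`, so that `Raux N q u b` is `siteEmb b (RpM q u)`. -/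
def siteEmb [MulZeroOneClass R] (b : Fin N) (A : Matrix (n × n) (n × n) R) :
    Matrix (n × (Fin N → n)) (n × (Fin N → n)) R :=
  Matrix.of fun x y =>
    A (x.1, x.2 b) (y.1, y.2 b) * (if ∀ c, c ≠ b → x.2 c = y.2 c then 1 else 0)

theorem siteEmb_transpose [MulZeroOneClass R] (b : Fin N) (A : Matrix (n × n) (n × n) R) :
    siteEmb b Aᵀ = (siteEmb b A)ᵀ := by
  ext x y
  simp [siteEmb, eq_comm]

theorem blockTriangular_siteEmb [MulZeroOneClass R] [LT n] (b : Fin N)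
    {A : Matrix (n × n) (n × n) R} (hA : A.BlockTriangular Prod.fst) :
    (siteEmb b A).BlockTriangular Prod.fst := by
  intro x y hxy
  simp [siteEmb, hA (i := (x.1, x.2 b)) (j := (y.1, y.2 b)) hxy]

theorem auxBlock_siteEmb_of_diagonal [Semiring R] (b : Fin N) {A : Matrix (n × n) (n × n) R}
    {i : n} {d : n → R} (hA : auxBlock i A = Matrix.diagonal d) :
    auxBlock i (siteEmb b A) = Matrix.diagonal fun f => d (f b) := by
  ext f g
  have hfg : f = g ↔ f b = g b ∧ ∀ c, c ≠ b → f c = g c := by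
    refine ⟨by rintro rfl; simp, fun ⟨hb, hc⟩ => funext fun c => ?_⟩
    exact (eq_or_ne c b).elim (fun h => h ▸ hb) (hc c)
  have hentry : A (i, f b) (i, g b) = if f b = g b then d (f b) else 0 := by
    rw [← auxBlock_apply i A, hA, Matrix.diagonal_apply]
  simp only [auxBlock_apply, siteEmb, Matrix.of_apply, hentry, Matrix.diagonal_apply, hfg, ite_and,
    mul_ite, mul_one, mul_zero]
  split_ifs <;> rfl

end SiteOperators

section ConstantRMatrix

/-- The constant Drinfeld–Jimbo R-matrix of `U_q(gl₃)`, conjugated by the gauge transformation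
`diag(1, z⁻², z⁻⁴)` of the auxiliary space. Together with the transpose of its counterpart at
`q⁻¹, z⁻¹` it gives the coefficients of `(u / z) ^ 3` and `-(z / u) ^ 3` in the matrix
`RpM q (u / z)`, once that is conjugated by the gauge transformation `diag(1, u⁻², u⁻⁴)`. -/
noncomputable def RConst (q z : ℂ) : Matrix (Fin 3 × Fin 3) (Fin 3 × Fin 3) ℂ :=
  Matrix.of fun x y =>
    if x = y then (if x.2 = x.1 then q else 1)
    else if x.swap = y ∧ x.1 < y.1 then (q - q⁻¹) * z ^ (2 * (((y.1 : ℕ) : ℤ) - ((x.1 : ℕ) : ℤ)))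
    else 0

theorem blockTriangular_RConst (q z : ℂ) : (RConst q z).BlockTriangular Prod.fst := by
  intro x y hyx
  have hne : x ≠ y := by rintro rfl; exact hyx.false
  simp [RConst, hne, hyx.not_gt]

theorem auxBlock_RConst (q z : ℂ) (i : Fin 3) :
    auxBlock i (RConst q z) = Matrix.diagonal fun a => if a = i then q else 1 := by
  ext a b
  simp [auxBlock_apply, RConst, Matrix.diagonal_apply]

theorem sum_single_apply {m R : Type*} [Fintype m] [DecidableEq m] [AddCommMonoid R] (σ : m → m)
    (F : m → R) (x y : m) :
    (∑ z, Matrix.single z (σ z) (F z)) x y = if σ x = y then F x else 0 := by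
  simp [Matrix.sum_apply, Matrix.single_apply, ite_and]

theorem RpM_eq_sum_single (q u : ℂ) :
    RpM q u =
      ∑ x : Fin 3 × Fin 3, Matrix.single x x
        (if x.1 = x.2 then u ^ 3 * q - (u ^ 3 * q)⁻¹ else u ^ 3 - (u ^ 3)⁻¹) +
      ∑ x : Fin 3 × Fin 3, Matrix.single x x.swap ((q - q⁻¹) *
        if x.1 < x.2 then u ^ ((3 : ℤ) - 2 * (((x.2 : ℕ) : ℤ) - ((x.1 : ℕ) : ℤ)))
        else if x.2 < x.1 then u ^ (2 * (((x.1 : ℕ) : ℤ) - ((x.2 : ℕ) : ℤ)) - (3 : ℤ))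
        else 0) := by
  simp only [RpM, Eb, Fintype.sum_prod_type, Matrix.single_kronecker_single, Matrix.smul_single,
    mul_one, smul_eq_mul, Fin.sum_univ_three, Prod.swap]
  simp only [↓reduceIte, Fin.isValue, zero_ne_one, Fin.reduceEq, one_ne_zero, Fin.reduceLT,
    lt_self_iff_false, add_zero, zero_add, smul_add, smul_single, smul_eq_mul, mul_zero,
    single_zero]
  abel

theorem RpM_div_mul_gauge {q u z : ℂ} (hu : u ≠ 0) (hz : z ≠ 0) (x y : Fin 3 × Fin 3) :
    RpM q (u / z) x y * u ^ (2 * ((y.1 : ℕ) : ℤ)) =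
      u ^ (2 * ((x.1 : ℕ) : ℤ)) * ((u ^ 3 / z ^ 3) * RConst q z x y -
        (z ^ 3 / u ^ 3) * RConst q⁻¹ z⁻¹ y x) := by
  obtain ⟨i, a⟩ := x
  rw [RpM_eq_sum_single, Matrix.add_apply, sum_single_apply, sum_single_apply]
  by_cases hdiag : (i, a) = y
  · obtain rfl := hdiag
    rcases eq_or_ne i a with rfl | hia
    · simp only [↓reduceIte, div_pow, _root_.mul_inv_rev, inv_div, Prod.swap_prod_mk,
        lt_self_iff_false, mul_zero, add_zero, RConst, of_apply, inv_inv]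
      ring
    · simp only [↓reduceIte, hia, div_pow, inv_div, Prod.swap_prod_mk, Prod.mk.injEq, hia.symm,
        and_self, add_zero, RConst, of_apply, mul_one]
      ring
  by_cases hswap : (a, i) = y
  · obtain rfl := hswap
    have hia : i ≠ a := fun h => hdiag (by rw [h])
    rcases lt_or_gt_of_ne hia with h | h
    · simp only [Prod.mk.injEq, hia, hia.symm, and_self, ↓reduceIte, Prod.swap_prod_mk, h, zero_add,
        RConst, of_apply, h.not_gt, and_false, mul_zero, sub_zero]
      rw [zpow_sub₀ (div_ne_zero hu hz), div_zpow, div_zpow, mul_sub, zpow_sub₀ hu, zpow_sub₀ hz]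
      field_simp
    · simp only [Prod.mk.injEq, hia, hia.symm, and_self, ↓reduceIte, Prod.swap_prod_mk, h.not_gt, h,
        zero_add, RConst, of_apply, and_false, mul_zero, inv_inv, _root_.inv_zpow', _root_.zpow_neg,
        zero_sub, mul_neg]
      rw [zpow_sub₀ (div_ne_zero hu hz), div_zpow, div_zpow, mul_sub, zpow_sub₀ hu, zpow_sub₀ hz]
      field_simp
      ring
  · have hswap' : y.swap ≠ (i, a) := fun h => hswap (by rw [← y.swap_swap, h]; rfl)
    simp [RConst, hdiag, hswap, Ne.symm hdiag, hswap']

theorem semiconjBy_diagonal_Raux {N : ℕ} {q u z : ℂ} (hu : u ≠ 0) (hz : z ≠ 0) (b : Fin N) :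
    SemiconjBy (Matrix.diagonal fun x : Fin 3 × HIdx N => u ^ (2 * ((x.1 : ℕ) : ℤ)))
      ((u ^ 3 / z ^ 3) • siteEmb b (RConst q z) - (z ^ 3 / u ^ 3) • (siteEmb b (RConst q⁻¹ z⁻¹))ᵀ)
      (Raux N q (u / z) b) := by
  ext x y
  rw [Matrix.diagonal_mul, Matrix.mul_diagonal, ← siteEmb_transpose]
  simp only [Raux, siteEmb, Matrix.sub_apply, Matrix.smul_apply, Matrix.of_apply,
    Matrix.transpose_apply, smul_eq_mul]
  rw [mul_right_comm, RpM_div_mul_gauge hu hz (x.1, x.2 b) (y.1, y.2 b)]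
  ring

end ConstantRMatrix

section TransferMatrix

variable {N : ℕ}

theorem DopInv_eq_Dop_inv (q : ℂ) (i : Fin 3) : DopInv N q i = Dop N q⁻¹ i := by
  simp only [DopInv, Dop, inv_pow]

theorem Dop_transpose (q : ℂ) (i : Fin 3) : (Dop N q i)ᵀ = Dop N q i :=
  Matrix.diagonal_transpose _

theorem auxBlock_prod_siteEmb_RConst (q : ℂ) (z : Fin N → ℂ) (i : Fin 3) {L : List (Fin N)}
    (hL : (L : Multiset (Fin N)) = Finset.univ.val) :
    auxBlock i (L.map fun b => siteEmb b (RConst q (z b))).prod = Dop N q i := by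
  have hblock (b : Fin N) : auxBlock i (siteEmb b (RConst q (z b))) =
      Matrix.diagonalRingHom (HIdx N) ℂ fun f => if f b = i then q else 1 :=
    auxBlock_siteEmb_of_diagonal b (auxBlock_RConst q (z b) i)
  have hcount : ∏ b, (fun f : HIdx N => if f b = i then q else 1) = fun f => q ^ cnt N f i := by
    ext f
    rw [Finset.prod_apply, Finset.prod_ite, Finset.prod_const, Finset.prod_const_one, mul_one, cnt]
  have htri : ∀ M ∈ L.map fun b => siteEmb b (RConst q (z b)), M.BlockTriangular Prod.fst := by
    simpa using fun b _ => blockTriangular_siteEmb b (blockTriangular_RConst q (z b))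
  calc auxBlock i (L.map fun b => siteEmb b (RConst q (z b))).prod
      = (L.map fun b => auxBlock i (siteEmb b (RConst q (z b)))).prod := by
        rw [auxBlock_list_prod htri, List.map_map]
        rfl
    _ = Matrix.diagonalRingHom (HIdx N) ℂ (∏ b, fun f => if f b = i then q else 1) := by
        rw [← list_prod_map_eq_prod_univ hL, map_list_prod, List.map_map]
        simp only [hblock, Function.comp_def]
    _ = Dop N q i := by rw [hcount]; rfl

theorem auxBlock_prod_siteEmb_RConst_transpose (q : ℂ) (z : Fin N → ℂ) (i : Fin 3)
    {L : List (Fin N)} (hL : (L : Multiset (Fin N)) = Finset.univ.val) :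
    auxBlock i (L.map fun b => (siteEmb b (RConst q (z b)))ᵀ).prod = Dop N q i := by
  have htranspose : (L.map fun b => (siteEmb b (RConst q (z b)))ᵀ).prod =
      (L.reverse.map fun b => siteEmb b (RConst q (z b))).prodᵀ := by
    rw [Matrix.transpose_list_prod, List.map_map, List.map_reverse, List.reverse_reverse]
    rfl
  rw [htranspose, auxBlock_transpose,
    auxBlock_prod_siteEmb_RConst q z i ((Multiset.coe_reverse L).trans hL), Dop_transpose]

theorem Kaux_diagonal (d : Fin 3 → ℂ) :
    Kaux N (Matrix.diagonal d) = Matrix.diagonal fun x => d x.1 := by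
  ext x y
  simp only [Kaux, Matrix.of_apply, Matrix.diagonal_apply, Prod.ext_iff, ite_and, mul_ite, mul_one,
    mul_zero]
  split_ifs <;> rfl

theorem T1_diagonal (q : ℂ) (ζ : Fin N → ℂ) (d : Fin 3 → ℂ) (u : ℂ) :
    T1 N q ζ (Matrix.diagonal d) u = ∑ i, d i • auxBlock i
      ((List.finRange N).reverse.map fun b => Raux N q (u / ζ b) b).prod := by
  ext f g
  simp [T1, Mon, Kaux_diagonal, auxBlock_apply, Matrix.sum_apply, Matrix.diagonal_mul]

theorem auxBlock_list_prod_Raux (q : ℂ) {ζ : Fin N → ℂ} (hζ : ∀ b, ζ b ≠ 0) {u : ℂ} (hu : u ≠ 0)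
    (L : List (Fin N)) (i : Fin 3) :
    auxBlock i (L.map fun b => Raux N q (u / ζ b) b).prod =
      auxBlock i (L.map fun b => (u ^ 3 / ζ b ^ 3) • siteEmb b (RConst q (ζ b)) -
        (ζ b ^ 3 / u ^ 3) • (siteEmb b (RConst q⁻¹ (ζ b)⁻¹))ᵀ).prod :=
  auxBlock_eq_of_semiconjBy_diagonal (d := fun k : Fin 3 => u ^ (2 * ((k : ℕ) : ℤ)))
    (semiconjBy_list_prod_map (fun b => semiconjBy_diagonal_Raux hu (hζ b) b) L)
    (zpow_ne_zero _ hu)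

theorem sum_smul_auxBlock_list_prod_Raux (q : ℂ) {ζ : Fin N → ℂ} (hζ : ∀ b, ζ b ≠ 0)
    (hinj : Function.Injective fun b => (ζ b ^ 3) ^ 2) {L : List (Fin N)}
    (hL : (L : Multiset (Fin N)) = Finset.univ.val) (i : Fin 3) :
    ∑ n, (∏ b ∈ Finset.univ.erase n, (ζ n ^ 3 / ζ b ^ 3 - ζ b ^ 3 / ζ n ^ 3))⁻¹ •
        auxBlock i (L.map fun b => Raux N q (ζ n / ζ b) b).prod =
      Dop N q i - DopInv N q i := by
  simp only [auxBlock_list_prod_Raux q hζ (hζ _), ← map_smul, ← map_sum]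
  rw [sum_smul_list_prod_div_sub_div (fun b => pow_ne_zero 3 (hζ b)) hinj hL, map_sub,
    auxBlock_prod_siteEmb_RConst q ζ i hL,
    auxBlock_prod_siteEmb_RConst_transpose q⁻¹ (fun b => (ζ b)⁻¹) i hL, DopInv_eq_Dop_inv]

end TransferMatrix

/-- sum rule for the transfer matrix with diagonal twist. -/
theorem transfer_matrix_sum_rule (N : ℕ) (hN : 1 ≤ N) (q p : ℂ)
    (hq : q ≠ 0) (hq2 : q ^ 2 ≠ 1) (hp : p ^ 3 = q)
    (ζ : Fin N → ℂ) (hζ : ∀ b, ζ b ≠ 0)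
    (hdist : ∀ n b : Fin N, n ≠ b → (ζ n ^ 3) ^ 2 ≠ (ζ b ^ 3) ^ 2)
    (α β γ : ℂ) :
    (1 / 2 : ℂ) • (α • (Dop N q 0 - DopInv N q 0) + β • (Dop N q 1 - DopInv N q 1)
        + γ • (Dop N q 2 - DopInv N q 2))
      = ∑ n : Fin N,
          (2 * ∏ b ∈ Finset.univ.erase n, (ζ n ^ 3 / ζ b ^ 3 - ζ b ^ 3 / ζ n ^ 3))⁻¹
            • T1 N q ζ (Ktw1 α β γ) (ζ n) := by
  have hinj : Function.Injective fun b => (ζ b ^ 3) ^ 2 := fun n b h =>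
    by_contra fun hne => hdist n b hne h
  have hL : ((List.finRange N).reverse : Multiset (Fin N)) = Finset.univ.val :=
    Multiset.coe_reverse _
  calc _ = (1 / 2 : ℂ) • ∑ i, ![α, β, γ] i • (Dop N q i - DopInv N q i) := by
        rw [Fin.sum_univ_three]
        rfl
    _ = _ := by
        simp only [← sum_smul_auxBlock_list_prod_Raux q hζ hinj hL, Ktw1, T1_diagonal,
          Finset.smul_sum, smul_smul, mul_inv, one_div]
        rw [Finset.sum_comm]
        simp only [mul_comm, mul_left_comm]
end

section
/- Reference eigenvector: let K = diag(k₁, k₂, k₃) be a diagonal twist and let |t₀⟩ = e₁ ⊗ e₁ ⊗ ⋯ ⊗ e₁ ∈ H (N factors). Then for every u ≠ 0, writing λ = u³, |t₀⟩ is a common eigenvector of the transfer matrices: T₁(u)|t₀⟩ = t_{1,0}(λ)|t₀⟩ with t_{1,0}(λ) = k₁ ∏_{a=1}^{N} (λq/ξ_a − ξ_a/(λq)) + (k₂ + k₃) ∏_{a=1}^{N} (λ/ξ_a − ξ_a/λ), and T₂(u)|t₀⟩ = t_{2,0}(λ)|t₀⟩ with t_{2,0}(λ) = ∏_{a=1}^{N}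 (λ/(qξ_a) − qξ_a/λ) · [ k₂k₃ ∏_{a=1}^{N} (λ/ξ_a − ξ_a/λ) + (k₁k₂ + k₁k₃) ∏_{a=1}^{N} (λq/ξ_a − ξ_a/(λq)) ]. -/
open Matrix Kronecker BigOperators

/-- The reference vector `|t₀⟩ = e₁ ⊗ ⋯ ⊗ e₁` in `H`. -/
noncomputable def t0 (N : ℕ) : HIdx N → ℂ :=
  fun f => if f = fun _ => (0 : Fin 3) then 1 else 0

/-!
Between two basis states `f`, `g` of the quantum space, the monodromy matrix is an ordered product
of `3 × 3` Lax matrices, one for each pair `f b`, `g b`, so that `T₁` is the trace of such a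
product. If `g` is the reference state, all these Lax matrices are upper triangular, and those with
`f b` different from the reference state have zero diagonal; the trace therefore vanishes unless
`f` is the reference state, where it is read off the diagonals.

For `T₂` the Lax matrices act on `ℂ³ ⊗ ℂ³`. The product `R_{b,c}(u) R_{a,c}(u/p)` preserves the
image of `P⁻`, which is three-dimensional, and its restriction is again triangular when the
incoming state is the reference one, so the same argument applies.
-/

section OrderedProducts

/-- The product `A (N-1) * ⋯ * A 0`, in the order in which the sites occur in `Mon`. -/
def descProd {M : Type*} [Monoid M] {N : ℕ} (A : Fin N → M) : M :=
  ((List.finRange N).reverse.map A).prod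

variable {N : ℕ}

lemma descProd_eq_prod {M : Type*} [CommMonoid M] (A : Fin N → M) : descProd A = ∏ b, A b := by
  rw [descProd, List.map_reverse, List.prod_reverse, Fin.prod_univ_def]

lemma descProd_eq_prod_ofFn {M : Type*} [Monoid M] (A : Fin N → M) :
    descProd A = (List.ofFn (A ∘ Fin.rev)).prod := by
  rw [descProd, List.ofFn_eq_map, ← List.map_map, List.finRange_reverse]

lemma sum_descProd {ι A : Type*} [Fintype ι] [Semiring A] (F : Fin N → ι → A) :
    ∑ g : Fin N → ι, descProd (fun b => F b (g b)) = descProd fun b => ∑ i, F b i := by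
  classical
  simp only [descProd_eq_prod_ofFn]
  exact (((MultilinearMap.mkPiAlgebraFin ℕ N A).domDomCongr Fin.revPerm).map_sum F).symm

variable {R m n : Type*} [CommSemiring R] [Fintype m] [Fintype n]

lemma blockTriangular_mul_apply_self {α : Type*} [LinearOrder α] {o : n → α}
    (ho : Function.Injective o) {A B : Matrix n n R} (hA : A.BlockTriangular o)
    (hB : B.BlockTriangular o) (i : n) : (A * B) i i = A i i * B i i := by
  rw [Matrix.mul_apply]
  refine Fintype.sum_eq_single i fun j hj => ?_
  rcases (ho.ne hj).lt_or_gt with h | h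
  · rw [hA h, zero_mul]
  · rw [hB h, mul_zero]

variable [DecidableEq m] [DecidableEq n]

lemma descProd_kronecker_descProd (A : Fin N → Matrix m m R) (B : Fin N → Matrix n n R) :
    descProd A ⊗ₖ descProd B = descProd fun b => A b ⊗ₖ B b := by
  unfold descProd
  induction (List.finRange N).reverse with
  | nil => simp
  | cons b l ih => simp only [List.map_cons, List.prod_cons, mul_kronecker_mul, ih]

lemma descProd_mul_eq_mul_descProd {V : Matrix m n R} {A : Fin N → Matrix m m R}
    {B : Fin N → Matrix n n R} (h : ∀ b, A b * V = V * B b) :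
    descProd A * V = V * descProd B := by
  unfold descProd
  induction (List.finRange N).reverse with
  | nil => simp
  | cons b l ih =>
    simp only [List.map_cons, List.prod_cons]
    rw [Matrix.mul_assoc, ih, ← Matrix.mul_assoc, h, Matrix.mul_assoc]

lemma descProd_apply_self {α : Type*} [LinearOrder α] {o : n → α}
    (ho : Function.Injective o) {A : Fin N → Matrix n n R} (hA : ∀ b, (A b).BlockTriangular o)
    (i : n) : descProd A i i = ∏ b, A b i i := by
  rw [← descProd_eq_prod]
  unfold descProd
  suffices H : ∀ l : List (Fin N), (l.map A).prod.BlockTriangular o ∧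
      (l.map A).prod i i = (l.map fun b => A b i i).prod from (H _).2
  intro l
  induction l with
  | nil => simp [Matrix.blockTriangular_one]
  | cons b l ih =>
    simp only [List.map_cons, List.prod_cons]
    exact ⟨(hA b).mul ih.1, by rw [blockTriangular_mul_apply_self ho (hA b) ih.1, ih.2]⟩

end OrderedProducts

section LaxOperator

/-- Diagonal coefficient of `R_q(u)` on `e i ⊗ e i`. -/
noncomputable def equalWeight (q u : ℂ) : ℂ := u ^ 3 * q - (u ^ 3 * q)⁻¹

/-- Diagonal coefficient of `R_q(u)` on `e i ⊗ e j` for `i ≠ j`. -/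
noncomputable def distinctWeight (u : ℂ) : ℂ := u ^ 3 - (u ^ 3)⁻¹

/-- Coefficient of `E i j ⊗ E j i` in `R_q(u)` for `i ≠ j`. The addition is that of `ℤ/3`: the
principal gradation makes the R-matrix invariant under cyclic shifts of the basis. -/
noncomputable def exchangeWeight (q u : ℂ) (i j : Fin 3) : ℂ :=
  (q - q⁻¹) * if j = i + 1 then u else u⁻¹

lemma equalWeight_div (q u z : ℂ) :
    equalWeight q (u / z) = u ^ 3 * q / z ^ 3 - z ^ 3 / (u ^ 3 * q) := by
  rw [equalWeight, div_pow, div_mul_eq_mul_div, inv_div]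

lemma distinctWeight_div (u z : ℂ) : distinctWeight (u / z) = u ^ 3 / z ^ 3 - z ^ 3 / u ^ 3 := by
  rw [distinctWeight, div_pow, inv_div]

lemma RpM_eq (q u : ℂ) : RpM q u = ∑ i : Fin 3, ∑ j : Fin 3,
    if i = j then equalWeight q u • Matrix.single (i, j) (i, j) 1
    else distinctWeight u • Matrix.single (i, j) (i, j) 1 +
      exchangeWeight q u i j • Matrix.single (i, j) (j, i) 1 := by
  rw [RpM, ← equalWeight, ← distinctWeight]
  simp [Eb, Fin.sum_univ_three, exchangeWeight, single_kronecker_single]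
  abel

lemma RpM_apply (q u : ℂ) (i j k l : Fin 3) :
    RpM q u (i, j) (k, l) =
      if (k, l) = (i, j) then (if i = j then equalWeight q u else distinctWeight u)
      else if (k, l) = (j, i) then exchangeWeight q u i j else 0 := by
  rw [RpM_eq, ← Fintype.sum_prod_type', Matrix.sum_apply, Fintype.sum_eq_single (i, j)]
  · split_ifs <;> simp_all [Matrix.single_apply, eq_comm]; grind
  · rintro ⟨a, b⟩ h
    split_ifs <;> simp [h]

/-- The operator on the auxiliary space obtained from `R_q(u)` by fixing the outgoing state `s`
and the incoming state `r` of the quantum factor. -/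
noncomputable def laxMatrix (q u : ℂ) (s r : Fin 3) : Matrix (Fin 3) (Fin 3) ℂ :=
  Matrix.of fun i j => RpM q u (i, s) (j, r)

lemma laxMatrix_eq (q u : ℂ) (s r : Fin 3) :
    laxMatrix q u s r =
      if s = r then diagonal fun i => if i = s then equalWeight q u else distinctWeight u
      else Matrix.single r s (exchangeWeight q u r s) := by
  ext i j
  simp only [laxMatrix, Matrix.of_apply, RpM_apply, Prod.mk.injEq]
  split_ifs <;> simp only [Matrix.diagonal_apply, Matrix.single_apply] <;> grind

lemma blockTriangular_laxMatrix_zero (q u : ℂ) (s : Fin 3) :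
    (laxMatrix q u s 0).BlockTriangular id := by
  intro i j (hij : j < i)
  have hi : i ≠ 0 := Fin.ne_zero_of_lt hij
  by_cases hs : s = 0 <;> simp [laxMatrix_eq, hs, hij.ne', hi.symm]

lemma laxMatrix_zero_apply_self (q u : ℂ) (s i : Fin 3) :
    laxMatrix q u s 0 i i =
      if s = 0 then (if i = 0 then equalWeight q u else distinctWeight u) else 0 := by
  by_cases hs : s = 0
  · simp [laxMatrix_eq, hs]
  · have : ¬(0 = i ∧ s = i) := fun h => hs (h.2.trans h.1.symm)
    simp [laxMatrix_eq, hs, this]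

end LaxOperator

section MatrixProductForm

variable {N : ℕ}

lemma Raux_mul_apply (q u : ℂ) (b : Fin N) (X : Matrix (Fin 3 × HIdx N) (Fin 3 × HIdx N) ℂ)
    (i : Fin 3) (f : HIdx N) (y : Fin 3 × HIdx N) :
    (Raux N q u b * X) (i, f) y =
      ∑ k, ∑ r, laxMatrix q u (f b) r i k * X (k, Function.update f b r) y := by
  have hRaux (k : Fin 3) (h : HIdx N) : Raux N q u b (i, f) (k, h) =
      ∑ r, if h = Function.update f b r then laxMatrix q u (f b) r i k else 0 := by
    have hupdate (r : Fin 3) : h = Function.update f b r ↔ h b = r ∧ ∀ c, c ≠ b → f c = h c := by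
      simp only [Function.eq_update_iff, eq_comm]
    simp [Raux, laxMatrix, hupdate, ite_and]
  simp only [Matrix.mul_apply, Fintype.sum_prod_type, hRaux, Finset.sum_mul, ite_mul, zero_mul]
  refine Finset.sum_congr rfl fun k _ => ?_
  rw [Finset.sum_comm]
  simp only [Finset.sum_ite_eq', Finset.mem_univ, if_true]

lemma prod_map_Raux_apply (q : ℂ) (w : Fin N → ℂ) {l : List (Fin N)} (hl : l.Nodup)
    (i j : Fin 3) (f g : HIdx N) :
    (l.map fun b => Raux N q (w b) b).prod (i, f) (j, g) =
      if ∀ c ∉ l, f c = g c then (l.map fun b => laxMatrix q (w b) (f b) (g b)).prod i j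
      else 0 := by
  induction l generalizing i f with
  | nil => simp [Matrix.one_apply, funext_iff, ← ite_and, and_comm]
  | cons b l ih =>
    obtain ⟨hb, hl⟩ := List.nodup_cons.mp hl
    have hagree (r : Fin 3) : (∀ c ∉ l, Function.update f b r c = g c) ↔
        r = g b ∧ ∀ c ∉ b :: l, f c = g c := by
      rw [← and_forall_ne b]
      grind [Function.update_apply]
    have hfactors (r : Fin 3) : (l.map fun c => laxMatrix q (w c) (Function.update f b r c) (g c))
        = l.map fun c => laxMatrix q (w c) (f c) (g c) :=
      List.map_congr_left fun c hc => by rw [Function.update_of_ne (ne_of_mem_of_not_mem hc hb)]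
    rw [List.map_cons, List.prod_cons, Raux_mul_apply]
    simp only [List.map_cons, List.prod_cons, ih hl, hagree, hfactors, ite_and, mul_ite, mul_zero,
      Finset.sum_ite_eq', Finset.mem_univ, if_true, Finset.sum_ite_irrel,
      Finset.sum_const_zero, Matrix.mul_apply]

lemma Mon_apply (q : ℂ) (ζ : Fin N → ℂ) (K : Matrix (Fin 3) (Fin 3) ℂ) (u : ℂ) (i j : Fin 3)
    (f g : HIdx N) :
    Mon N q ζ K u (i, f) (j, g) =
      (K * descProd fun b => laxMatrix q (u / ζ b) (f b) (g b)) i j := by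
  have hprod := prod_map_Raux_apply q (fun b => u / ζ b)
    (List.nodup_reverse.mpr (List.nodup_finRange N))
  simp [Mon, Matrix.mul_apply, Fintype.sum_prod_type, Kaux, descProd, hprod, -List.map_reverse]

lemma T1_apply (q : ℂ) (ζ : Fin N → ℂ) (K : Matrix (Fin 3) (Fin 3) ℂ) (u : ℂ) (f g : HIdx N) :
    T1 N q ζ K u f g = (K * descProd fun b => laxMatrix q (u / ζ b) (f b) (g b)).trace := by
  simp only [T1, Matrix.of_apply, Mon_apply, Matrix.trace, Matrix.diag_apply]

/-- The operator `R_{b,c}(u) R_{a,c}(v)` as an operator on the two auxiliary spaces `a ⊗ b`, for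
fixed outgoing state `s` and incoming state `r` of the quantum factor `c`. -/
noncomputable def laxPair (q u v : ℂ) (s r : Fin 3) : Matrix (Fin 3 × Fin 3) (Fin 3 × Fin 3) ℂ :=
  ∑ t, laxMatrix q v t r ⊗ₖ laxMatrix q u s t

lemma T2_eq_trace (q p : ℂ) (ζ : Fin N → ℂ) (K : Matrix (Fin 3) (Fin 3) ℂ) (u : ℂ)
    (f g : HIdx N) :
    T2 N q p ζ K u f g = (Pm q p * Matrix.of fun x y : Fin 3 × Fin 3 =>
      ∑ h, Mon N q ζ K u (x.2, f) (y.2, h) * Mon N q ζ K (u / p) (x.1, h) (y.1, g)).trace := by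
  simp only [T2, embP, embB, embA, Matrix.mul_apply, of_apply, Fintype.sum_prod_type, mul_ite,
    mul_one, mul_zero, ite_mul, zero_mul, Finset.sum_ite_irrel, Finset.sum_ite_eq,
    Finset.sum_ite_eq', Finset.mem_univ, ↓reduceIte, Finset.sum_const_zero, Finset.sum_mul,
    Finset.mul_sum, mul_assoc, Matrix.trace, diag_apply]
  refine Finset.sum_congr rfl fun ia _ => Finset.sum_congr rfl fun ib _ =>
    Finset.sum_congr rfl fun ja _ => Finset.sum_comm

lemma T2_apply (q p : ℂ) (ζ : Fin N → ℂ) (K : Matrix (Fin 3) (Fin 3) ℂ) (u : ℂ)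
    (f g : HIdx N) :
    T2 N q p ζ K u f g = (Pm q p * ((K ⊗ₖ K) *
      descProd fun b => laxPair q (u / ζ b) (u / p / ζ b) (f b) (g b))).trace := by
  simp only [laxPair]
  rw [T2_eq_trace, ← sum_descProd (fun b t => laxMatrix q (u / p / ζ b) t (g b) ⊗ₖ
    laxMatrix q (u / ζ b) (f b) t), Matrix.mul_sum]
  congr 2
  ext x y
  simp only [Matrix.of_apply, Matrix.sum_apply]
  refine Finset.sum_congr rfl fun h _ => ?_
  rw [← descProd_kronecker_descProd, ← mul_kronecker_mul, kroneckerMap_apply, Mon_apply, Mon_apply,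
    mul_comm]

end MatrixProductForm

section Fusion

/-- The `3`-dimensional image of the q-antisymmetric projector: the column indexed by `k` is
`e (k+1) ⊗ e (k+2) - p • e (k+2) ⊗ e (k+1)`, with indices in `ℤ/3`. -/
noncomputable def qWedge (p : ℂ) : Matrix (Fin 3 × Fin 3) (Fin 3) ℂ :=
  Matrix.of fun x k =>
    if x = (k + 1, k + 2) then 1 else if x = (k + 2, k + 1) then -p else 0

lemma mul_qWedge_apply {m : Type*} (p : ℂ) (A : Matrix m (Fin 3 × Fin 3) ℂ) (x : m) (k : Fin 3) :
    (A * qWedge p) x k = A x (k + 1, k + 2) - p * A x (k + 2, k + 1) := by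
  have hcol (y : Fin 3 × Fin 3) : qWedge p y k =
      (if y = (k + 1, k + 2) then 1 else 0) + if y = (k + 2, k + 1) then -p else 0 := by
    by_cases hy : y = (k + 2, k + 1) <;> simp [qWedge, hy]
  simp only [Matrix.mul_apply, hcol, mul_add, mul_ite, mul_one, mul_zero, Finset.sum_add_distrib,
    Finset.sum_ite_eq', Finset.mem_univ, if_true, mul_neg, mul_comm p, sub_eq_add_neg]

lemma transpose_qWedge_inv_mul_qWedge {p : ℂ} (hp : p ≠ 0) :
    (qWedge p⁻¹)ᵀ * qWedge p = (2 : ℂ) • 1 := by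
  ext i j
  fin_cases i <;> fin_cases j <;>
    rw [mul_qWedge_apply] <;> simp [qWedge, hp, one_add_one_eq_two]

lemma RpM_inv_eq_smul_qWedge_mul_transpose {q p : ℂ} (hp0 : p ≠ 0) (hp : p ^ 3 = q) :
    RpM q p⁻¹ = (q⁻¹ - q) • (qWedge p * (qWedge p⁻¹)ᵀ) := by
  have hequal : equalWeight q p⁻¹ = 0 := by simp [equalWeight, ← hp, hp0]
  have hdistinct : distinctWeight p⁻¹ = q⁻¹ - q := by simp [distinctWeight, hp]
  have hexchange (i j : Fin 3) : exchangeWeight q p⁻¹ i j =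
      (q⁻¹ - q) * -(if j = i + 1 then p⁻¹ else p) := by
    rw [exchangeWeight, inv_inv, ← neg_sub, neg_mul_comm]
  ext ⟨i, j⟩ ⟨k, l⟩
  rw [RpM_apply, hequal, hdistinct, hexchange]
  fin_cases i <;> fin_cases j <;> fin_cases k <;> fin_cases l <;>
    simp [qWedge, Matrix.mul_apply, Fin.sum_univ_three, hp0]

lemma Pm_eq_smul_qWedge_mul_transpose {q p : ℂ} (hp0 : p ≠ 0) (hq2 : q ^ 2 ≠ 1)
    (hp : p ^ 3 = q) :
    Pm q p = (2 : ℂ)⁻¹ • (qWedge p * (qWedge p⁻¹)ᵀ) := by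
  have hq : q ≠ 0 := hp ▸ pow_ne_zero 3 hp0
  have hq' : q⁻¹ - q ≠ 0 := by
    rw [inv_eq_one_div, div_sub' hq, ← sq]
    exact div_ne_zero (sub_ne_zero.mpr hq2.symm) hq
  rw [Pm, RpM_inv_eq_smul_qWedge_mul_transpose hp0 hp, smul_smul, mul_inv,
    inv_mul_cancel_right₀ hq']

lemma trace_Pm_mul {q p : ℂ} (hp0 : p ≠ 0) (hq2 : q ^ 2 ≠ 1) (hp : p ^ 3 = q)
    {X : Matrix (Fin 3 × Fin 3) (Fin 3 × Fin 3) ℂ} {Y : Matrix (Fin 3) (Fin 3) ℂ}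
    (h : X * qWedge p = qWedge p * Y) : (Pm q p * X).trace = Y.trace := by
  rw [Pm_eq_smul_qWedge_mul_transpose hp0 hq2 hp, smul_mul, Matrix.trace_smul, Matrix.mul_assoc,
    Matrix.trace_mul_comm, Matrix.mul_assoc, h, ← Matrix.mul_assoc,
    transpose_qWedge_inv_mul_qWedge hp0, smul_mul, Matrix.one_mul, Matrix.trace_smul,
    smul_smul, inv_mul_cancel₀ two_ne_zero, one_smul]

lemma kronecker_diagonal_mul_qWedge (p : ℂ) (κ : Fin 3 → ℂ) :
    (diagonal κ ⊗ₖ diagonal κ) * qWedge p =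
      qWedge p * diagonal fun i => κ (i + 1) * κ (i + 2) := by
  ext x k
  rw [diagonal_kronecker_diagonal, diagonal_mul, mul_diagonal]
  simp only [qWedge, Matrix.of_apply]
  split_ifs with h₁ h₂
  · simp [h₁]
  · simp [h₂, mul_comm]
  · simp

/-- The restriction of `laxPair q u (u / p) s 0` to the image of `qWedge p`. -/
noncomputable def fusedLax (q p u : ℂ) (s : Fin 3) : Matrix (Fin 3) (Fin 3) ℂ :=
  distinctWeight (u / p) •
    if s = 0 then diagonal fun i => if i = 0 then distinctWeight u else equalWeight q u
    else Matrix.single s 0 (-exchangeWeight q (p * u) 0 s)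

lemma laxPair_mul_qWedge {q p u : ℂ} (hp0 : p ≠ 0) (hp : p ^ 3 = q) (hu : u ≠ 0) (s : Fin 3) :
    laxPair q u (u / p) s 0 * qWedge p = qWedge p * fusedLax q p u s := by
  subst hp
  ext ⟨i, j⟩ k
  rw [mul_qWedge_apply, Matrix.mul_apply, Fin.sum_univ_three]
  simp only [laxPair, Matrix.sum_apply, kroneckerMap_apply, Fin.sum_univ_three, laxMatrix,
    Matrix.of_apply, RpM_apply]
  -- Only eight entries are nontrivial; each is an identity of rational functions of `p` and `u`.
  fin_cases s <;> fin_cases i <;> fin_cases j <;> fin_cases k <;>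
    simp [fusedLax, qWedge, equalWeight, distinctWeight, exchangeWeight] <;>
    field_simp <;> ring

lemma blockTriangular_fusedLax (q p u : ℂ) (s : Fin 3) :
    (fusedLax q p u s).BlockTriangular OrderDual.toDual := by
  intro i j (hij : i < j)
  have hj : j ≠ 0 := Fin.ne_zero_of_lt hij
  by_cases hs : s = 0 <;> simp [fusedLax, hs, hij.ne, hj.symm]

lemma fusedLax_apply_self (q p u : ℂ) (s i : Fin 3) :
    fusedLax q p u s i i = if s = 0 then
      distinctWeight (u / p) * (if i = 0 then distinctWeight u else equalWeight q u) else 0 := by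
  by_cases hs : s = 0
  · simp [fusedLax, hs]
  · have : ¬(s = i ∧ 0 = i) := fun h => hs (h.1.trans h.2.symm)
    simp [fusedLax, hs, this]

end Fusion

lemma mulVec_t0_apply {N : ℕ} (T : Matrix (HIdx N) (HIdx N) ℂ) (f : HIdx N) :
    (T *ᵥ t0 N) f = T f 0 := by
  have ht : t0 N = Pi.single 0 1 := by ext g; simp only [t0, Pi.single_apply]; rfl
  rw [ht, Matrix.mulVec_single_one, Matrix.col_apply]

lemma trace_diagonal_mul_descProd {N : ℕ} {α : Type*} [LinearOrder α] {o : Fin 3 → α}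
    (ho : Function.Injective o) {L : Fin N → Fin 3 → Matrix (Fin 3) (Fin 3) ℂ}
    (hL : ∀ b s, (L b s).BlockTriangular o) {w : Fin N → Fin 3 → ℂ}
    (hw : ∀ b s i, L b s i i = if s = 0 then w b i else 0) (κ : Fin 3 → ℂ) (f : HIdx N) :
    (diagonal κ * descProd fun b => L b (f b)).trace = (∑ i, κ i * ∏ b, w b i) * t0 N f := by
  have hf : (∀ b, f b = 0) ↔ f = fun _ => 0 := funext_iff.symm
  simp only [Matrix.trace, Matrix.diag_apply, Matrix.diagonal_mul,
    descProd_apply_self ho fun b => hL b (f b), hw, Finset.prod_ite_zero, Finset.mem_univ,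
    true_implies, hf, t0, mul_ite, mul_one, mul_zero, Finset.sum_ite_irrel, Finset.sum_const_zero]

lemma T1_diagonal_mulVec_t0 {N : ℕ} (q : ℂ) (ζ : Fin N → ℂ) (κ : Fin 3 → ℂ) (u : ℂ) :
    T1 N q ζ (diagonal κ) u *ᵥ t0 N =
      (∑ i, κ i * ∏ b, if i = 0 then equalWeight q (u / ζ b) else distinctWeight (u / ζ b)) •
        t0 N := by
  ext f
  rw [mulVec_t0_apply, T1_apply, Pi.smul_apply, smul_eq_mul]
  exact trace_diagonal_mul_descProd Function.injective_id
    (fun b s => blockTriangular_laxMatrix_zero q (u / ζ b) s)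
    (fun b s i => laxMatrix_zero_apply_self q (u / ζ b) s i) κ f

lemma T2_diagonal_mulVec_t0 {N : ℕ} {q p : ℂ} (hq : q ≠ 0) (hq2 : q ^ 2 ≠ 1) (hp : p ^ 3 = q)
    {ζ : Fin N → ℂ} (hζ : ∀ b, ζ b ≠ 0) (κ : Fin 3 → ℂ) {u : ℂ} (hu : u ≠ 0) :
    T2 N q p ζ (diagonal κ) u *ᵥ t0 N =
      (∑ i, κ (i + 1) * κ (i + 2) * ∏ b, distinctWeight (u / ζ b / p) *
        if i = 0 then distinctWeight (u / ζ b) else equalWeight q (u / ζ b)) • t0 N := by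
  have hp0 : p ≠ 0 := ne_zero_pow three_ne_zero (hp.symm ▸ hq)
  ext f
  have hfusion : (diagonal κ ⊗ₖ diagonal κ *
      descProd fun b => laxPair q (u / ζ b) (u / p / ζ b) (f b) 0) * qWedge p =
      qWedge p * (diagonal (fun i => κ (i + 1) * κ (i + 2)) *
        descProd fun b => fusedLax q p (u / ζ b) (f b)) := by
    rw [Matrix.mul_assoc, descProd_mul_eq_mul_descProd (B := fun b => fusedLax q p (u / ζ b) (f b)),
      ← Matrix.mul_assoc, kronecker_diagonal_mul_qWedge, Matrix.mul_assoc]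
    intro b
    rw [div_right_comm, laxPair_mul_qWedge hp0 hp (div_ne_zero hu (hζ b))]
  rw [mulVec_t0_apply, T2_apply, Pi.smul_apply, smul_eq_mul]
  exact (trace_Pm_mul hp0 hq2 hp hfusion).trans <|
    trace_diagonal_mul_descProd OrderDual.toDual.injective
      (fun b s => blockTriangular_fusedLax q p (u / ζ b) s)
      (fun b s i => fusedLax_apply_self q p (u / ζ b) s i) _ f

/-- `|t₀⟩` is a common eigenvector of `T₁` and `T₂` with the
explicit eigenvalues `t_{1,0}(λ)`, `t_{2,0}(λ)`, `λ = u³`. -/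
theorem reference_eigenvector (N : ℕ) (hN : 1 ≤ N) (q p : ℂ)
    (hq : q ≠ 0) (hq2 : q ^ 2 ≠ 1) (hp : p ^ 3 = q)
    (ζ : Fin N → ℂ) (hζ : ∀ b, ζ b ≠ 0) (k₁ k₂ k₃ : ℂ)
    (u : ℂ) (hu : u ≠ 0) :
    (T1 N q ζ (Ktw1 k₁ k₂ k₃) u).mulVec (t0 N)
      = (k₁ * ∏ a : Fin N, (u ^ 3 * q / ζ a ^ 3 - ζ a ^ 3 / (u ^ 3 * q))
          + (k₂ + k₃) * ∏ a : Fin N, (u ^ 3 / ζ a ^ 3 - ζ a ^ 3 / u ^ 3)) • t0 N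
    ∧ (T2 N q p ζ (Ktw1 k₁ k₂ k₃) u).mulVec (t0 N)
      = ((∏ a : Fin N, (u ^ 3 / (q * ζ a ^ 3) - q * ζ a ^ 3 / u ^ 3))
          * (k₂ * k₃ * ∏ a : Fin N, (u ^ 3 / ζ a ^ 3 - ζ a ^ 3 / u ^ 3)
            + (k₁ * k₂ + k₁ * k₃)
              * ∏ a : Fin N, (u ^ 3 * q / ζ a ^ 3 - ζ a ^ 3 / (u ^ 3 * q)))) • t0 N := by
  have hdistinct (a : Fin N) :
      distinctWeight (u / ζ a / p) = u ^ 3 / (q * ζ a ^ 3) - q * ζ a ^ 3 / u ^ 3 := by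
    rw [div_div, distinctWeight_div, mul_pow, hp, mul_comm q]
  constructor
  · rw [Ktw1, T1_diagonal_mulVec_t0]
    simp only [Fin.isValue, equalWeight_div, distinctWeight_div, Finset.prod_ite_irrel, mul_ite,
      Fin.sum_univ_three, ↓reduceIte, cons_val_zero, one_ne_zero, cons_val_one, Fin.reduceEq,
      cons_val]
    congr 1
    ring
  · rw [Ktw1, T2_diagonal_mulVec_t0 hq hq2 hp hζ _ hu]
    simp only [Fin.isValue, hdistinct, distinctWeight_div u, equalWeight_div, mul_ite,
      Finset.prod_ite_irrel, Finset.prod_mul_distrib, Fin.sum_univ_three, ↓reduceIte, zero_add,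
      cons_val_one, cons_val_zero, cons_val, one_ne_zero, Fin.reduceAdd, Fin.reduceEq]
    congr 1
    ring
end
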